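/- arXiv:2307.11138 — 3 statements merged into one kernel-verified Lean document; each statement's English description precedes it below -/
import Mathlib

section
/- Let N be a positive integer, let E, A be real N×N matrices with E invertible, let δt > 0, let f : ℝ^N → ℝ^N be Lipschitz continuous with constant L ≥ 0 (i.e., ‖f(v) − f(w)‖₂ ≤ L‖v − w‖₂ for all v, w), let g : ℕ → ℝ^N be a given sequence of input vectors, and let x, x̃ : ℕ → ℝ^N be two sequences such that x satisfies the time-discrete recursion E x^k = A x^{k−1} + δt (f(x^{k−1}) + g^k) for all k ≥ 1. Define the residual r^k := A x̃^{k−1} + δt (f(x̃^{k−1}) + g^k) − E x̃^k and the error e^k := x^k − x̃^k. Set ζ := ‖E^{−1}‖₂ and ξ := ‖E^{−1} A‖₂ + δt · L · ‖E^{−1}‖₂ (operator 2-norms). Then for every k ≥ 0, ‖e^k‖₂ ≤ ξ^k ‖e^0‖₂ + Σ_{i=1}^{k} ζ · ξ^{k−i} · ‖r^i‖₂. -/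
open Matrix
open scoped Matrix.Norms.L2Operator

/-- Matrix-vector multiplication, viewed as a map on Euclidean space (so that the
Euclidean 2-norm is used on the result). -/
noncomputable def matVec {N : ℕ} (M : Matrix (Fin N) (Fin N) ℝ)
    (v : EuclideanSpace ℝ (Fin N)) : EuclideanSpace ℝ (Fin N) :=
  (EuclideanSpace.equiv (Fin N) ℝ).symm (M.mulVec v)

theorem matVec_eq_toLp {N : ℕ} (M : Matrix (Fin N) (Fin N) ℝ)
    (v : EuclideanSpace ℝ (Fin N)) : matVec M v = WithLp.toLp 2 (M.mulVec v.ofLp) := rfl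

theorem matVec_norm_le {N : ℕ} (M : Matrix (Fin N) (Fin N) ℝ)
    (v : EuclideanSpace ℝ (Fin N)) : ‖matVec M v‖ ≤ ‖M‖ * ‖v‖ :=
  Matrix.l2_opNorm_mulVec M v

theorem matVec_add' {N : ℕ} (M : Matrix (Fin N) (Fin N) ℝ)
    (v w : EuclideanSpace ℝ (Fin N)) : matVec M (v + w) = matVec M v + matVec M w := by
  simp [matVec_eq_toLp, Matrix.mulVec_add]

theorem matVec_sub' {N : ℕ} (M : Matrix (Fin N) (Fin N) ℝ)
    (v w : EuclideanSpace ℝ (Fin N)) : matVec M (v - w) = matVec M v - matVec M w := by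
  simp [matVec_eq_toLp, Matrix.mulVec_sub]

theorem matVec_mul' {N : ℕ} (M P : Matrix (Fin N) (Fin N) ℝ)
    (v : EuclideanSpace ℝ (Fin N)) : matVec (M * P) v = matVec M (matVec P v) := by
  simp [matVec_eq_toLp, Matrix.mulVec_mulVec]

/-- Residual-based error bound for the first-order IMEX time-discrete scheme
(Theorem 2.1 of the paper). -/
theorem residual_based_error_bound
    (N : ℕ) (hN : 0 < N)
    (E A : Matrix (Fin N) (Fin N) ℝ) (hE : IsUnit E)
    (δt : ℝ) (hδt : 0 < δt)
    (f : EuclideanSpace ℝ (Fin N) → EuclideanSpace ℝ (Fin N))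
    (L : ℝ) (hL : 0 ≤ L)
    (hf : ∀ v w : EuclideanSpace ℝ (Fin N), ‖f v - f w‖ ≤ L * ‖v - w‖)
    (g x xt : ℕ → EuclideanSpace ℝ (Fin N))
    (hx : ∀ k, 1 ≤ k →
      matVec E (x k) = matVec A (x (k - 1)) + δt • (f (x (k - 1)) + g k))
    (r : ℕ → EuclideanSpace ℝ (Fin N))
    (hr : ∀ k, r k =
      matVec A (xt (k - 1)) + δt • (f (xt (k - 1)) + g k) - matVec E (xt k))
    (e : ℕ → EuclideanSpace ℝ (Fin N))
    (he : ∀ k, e k = x k - xt k)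
    (ζ ξ : ℝ)
    (hζ : ζ = ‖E⁻¹‖)
    (hξ : ξ = ‖E⁻¹ * A‖ + δt * L * ‖E⁻¹‖) :
    ∀ k, ‖e k‖ ≤ ξ ^ k * ‖e 0‖ + ∑ i ∈ Finset.Icc 1 k, ζ * ξ ^ (k - i) * ‖r i‖ := by
  have hζ0 : 0 ≤ ζ := hζ ▸ norm_nonneg _
  have hξ0 : 0 ≤ ξ := by rw [hξ]; positivity
  have step : ∀ k, ‖e (k + 1)‖ ≤ ξ * ‖e k‖ + ζ * ‖r (k + 1)‖ := by
    intro k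
    have h1 := hx (k + 1) (by omega)
    have h2 := hr (k + 1)
    simp only [Nat.add_sub_cancel] at h1 h2
    have h3 : matVec E (e (k + 1)) =
        matVec A (e k) + (δt • (f (x k) - f (xt k)) + r (k + 1)) := by
      rw [he, he, matVec_sub', matVec_sub', h1, h2]
      module
    have h4 : e (k + 1) = matVec (E⁻¹ * A) (e k) +
        (matVec E⁻¹ (δt • (f (x k) - f (xt k))) + matVec E⁻¹ (r (k + 1))) := by
      have hdet := (Matrix.isUnit_iff_isUnit_det E).mp hE
      rw [matVec_mul', ← matVec_add', ← matVec_add', ← h3, ← matVec_mul',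
        Matrix.nonsing_inv_mul E hdet]
      simp [matVec_eq_toLp]
    have h5 : ‖δt • (f (x k) - f (xt k))‖ ≤ δt * (L * ‖e k‖) := by
      rw [norm_smul, Real.norm_of_nonneg hδt.le, he]
      exact mul_le_mul_of_nonneg_left (hf _ _) hδt.le
    have h6 := matVec_norm_le (E⁻¹ * A) (e k)
    have h7 := matVec_norm_le E⁻¹ (δt • (f (x k) - f (xt k)))
    have h8 := matVec_norm_le E⁻¹ (r (k + 1))
    have h9 := mul_le_mul_of_nonneg_left h5 (norm_nonneg E⁻¹)
    rw [h4]
    refine (norm_add_le _ _).trans ?_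
    refine (add_le_add_right (norm_add_le _ _) _).trans ?_
    rw [hξ, hζ]
    linarith
  intro k
  induction k with
  | zero => simp
  | succ k ih =>
    refine (step k).trans ?_
    rw [Finset.sum_Icc_succ_top (by omega)]
    have hs : ∑ i ∈ Finset.Icc 1 k, ζ * ξ ^ (k + 1 - i) * ‖r i‖ =
        ξ * ∑ i ∈ Finset.Icc 1 k, ζ * ξ ^ (k - i) * ‖r i‖ := by
      rw [Finset.mul_sum]
      refine Finset.sum_congr rfl fun i hi => ?_
      rw [Nat.succ_sub (Finset.mem_Icc.mp hi).2, pow_succ]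
      ring
    rw [hs]
    have := mul_le_mul_of_nonneg_left ih hξ0
    simp only [Nat.sub_self, pow_zero, mul_one]
    rw [pow_succ]
    linarith
end

section
/- Let N be a positive integer, let E, A be real N×N matrices with E invertible, let δt > 0, let f : ℝ^N → ℝ^N, let g : ℕ → ℝ^N, let x : ℕ → ℝ^N be given snapshots with defect d^k := E x^k − (A x^{k−1} + δt (f(x^{k−1}) + g^k)), and let x̃ : ℕ → ℝ^N be an approximate solution. Define the residual r^k := A x̃^{k−1} + δt (f(x̃^{k−1}) + g^k) + d^k − E x̃^k and the auxiliary residual r̆^k := A x^{k−1} + δt (f(x^{k−1}) + g^k) + d^k − E x̃^k. Let c ∈ ℝ^N, let x̃_du ∈ ℝ^N with dual residual r_du := −c − Eᵀ x̃_du, and define the true output y^k := cᵀ x^k and the modified output ȳ^k := cᵀ x̃^k − x̃_duᵀ r^k. Then for every k ≥ 1, the exact error representation y^k − ȳ^k = − r_duᵀ E^{−1} r̆^k + x̃_duᵀ (r^k − r̆^k) holds. -/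
open Matrix

/-- Exact error representation for the modified output of the defect-corrected scheme:
`y^k − ȳ^k = − r_duᵀ E⁻¹ r̆^k + x̃_duᵀ (r^k − r̆^k)`. -/
theorem modified_output_error_representation
    (N : ℕ) (hN : 0 < N)
    (E A : Matrix (Fin N) (Fin N) ℝ) (hE : IsUnit E)
    (δt : ℝ) (hδt : 0 < δt)
    (f : EuclideanSpace ℝ (Fin N) → EuclideanSpace ℝ (Fin N))
    (g x xt : ℕ → EuclideanSpace ℝ (Fin N))
    (d : ℕ → EuclideanSpace ℝ (Fin N))
    (hd : ∀ k, 1 ≤ k →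
      d k = matVec E (x k) - (matVec A (x (k - 1)) + δt • (f (x (k - 1)) + g k)))
    (r : ℕ → EuclideanSpace ℝ (Fin N))
    (hr : ∀ k, 1 ≤ k →
      r k = matVec A (xt (k - 1)) + δt • (f (xt (k - 1)) + g k) + d k - matVec E (xt k))
    (rb : ℕ → EuclideanSpace ℝ (Fin N))
    (hrb : ∀ k, 1 ≤ k →
      rb k = matVec A (x (k - 1)) + δt • (f (x (k - 1)) + g k) + d k - matVec E (xt k))
    (c xtdu : EuclideanSpace ℝ (Fin N))
    (rdu : EuclideanSpace ℝ (Fin N))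
    (hrdu : rdu = -c - matVec E.transpose xtdu)
    (y ybar : ℕ → ℝ)
    (hy : ∀ k, y k = c ⬝ᵥ x k)
    (hybar : ∀ k, ybar k = c ⬝ᵥ xt k - xtdu ⬝ᵥ r k) :
    ∀ k, 1 ≤ k →
      y k - ybar k = -(rdu ⬝ᵥ matVec E⁻¹ (rb k)) + xtdu ⬝ᵥ (r k - rb k) := by
  intro k hk
  have h1 : rb k = matVec E (x k) - matVec E (xt k) := by
    rw [hrb k hk, hd k hk]; abel
  have h2 : (rb k).ofLp = E *ᵥ ((x k).ofLp - (xt k).ofLp) := by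
    rw [h1, Matrix.mulVec_sub]; rfl
  have hdet : IsUnit E.det := (Matrix.isUnit_iff_isUnit_det E).mp hE
  have h3 : (matVec E⁻¹ (rb k)).ofLp = (x k).ofLp - (xt k).ofLp := by
    change E⁻¹ *ᵥ (rb k).ofLp = _
    rw [h2, Matrix.mulVec_mulVec, Matrix.nonsing_inv_mul E hdet, Matrix.one_mulVec]
  have h4 : rdu.ofLp = -c.ofLp - Eᵀ *ᵥ xtdu.ofLp := by
    rw [hrdu]; rfl
  have h5 : ∀ v : Fin N → ℝ, (Eᵀ *ᵥ xtdu.ofLp) ⬝ᵥ v = xtdu.ofLp ⬝ᵥ (E *ᵥ v) := by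
    intro v
    rw [Matrix.mulVec_transpose, Matrix.dotProduct_mulVec]
  rw [hy, hybar, h3, h4, sub_dotProduct, h5, ← h2]
  simp only [WithLp.ofLp_sub, dotProduct_sub, neg_dotProduct]
  ring
end

section
/- Let N be a positive integer, let E, A be real N×N matrices with E invertible, let δt > 0, let f : ℝ^N → ℝ^N, let g : ℕ → ℝ^N, let x : ℕ → ℝ^N be given snapshots with defect d^k := E x^k − (A x^{k−1} + δt (f(x^{k−1}) + g^k)), and let x̃ : ℕ → ℝ^N be an approximate solution. Define the residual r^k := A x̃^{k−1} + δt (f(x̃^{k−1}) + g^k) + d^k − E x̃^k and the auxiliary residual r̆^k := A x^{k−1} + δt (f(x^{k−1}) + g^k) + d^k − E x̃^k. Let c ∈ ℝ^N, let x̃_du ∈ ℝ^N with dual residual r_du := −c − Eᵀ x̃_du, and define the true output y^k := cᵀ x^k and the modified output ȳ^k := cᵀ x̃^k − x̃_duᵀ r^k. Then for every k ≥ 1, |y^k − ȳ^k| ≤ ‖E^{−1}‖₂ · ‖r_du‖₂ · ‖r̆^k‖₂ + ‖x̃_du‖₂ · ‖r^k − r̆^k‖₂. -/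
open Matrix
open scoped Matrix.Norms.L2Operator

/-- A posteriori error bound for the modified output of the defect-corrected scheme
(Theorem 3.1 of the paper):
`|y^k − ȳ^k| ≤ ‖E⁻¹‖ ‖r_du‖ ‖r̆^k‖ + ‖x̃_du‖ ‖r^k − r̆^k‖`. -/
theorem modified_output_error_bound
    (N : ℕ) (hN : 0 < N)
    (E A : Matrix (Fin N) (Fin N) ℝ) (hE : IsUnit E)
    (δt : ℝ) (hδt : 0 < δt)
    (f : EuclideanSpace ℝ (Fin N) → EuclideanSpace ℝ (Fin N))
    (g x xt : ℕ → EuclideanSpace ℝ (Fin N))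
    (d : ℕ → EuclideanSpace ℝ (Fin N))
    (hd : ∀ k, 1 ≤ k →
      d k = matVec E (x k) - (matVec A (x (k - 1)) + δt • (f (x (k - 1)) + g k)))
    (r : ℕ → EuclideanSpace ℝ (Fin N))
    (hr : ∀ k, 1 ≤ k →
      r k = matVec A (xt (k - 1)) + δt • (f (xt (k - 1)) + g k) + d k - matVec E (xt k))
    (rb : ℕ → EuclideanSpace ℝ (Fin N))
    (hrb : ∀ k, 1 ≤ k →
      rb k = matVec A (x (k - 1)) + δt • (f (x (k - 1)) + g k) + d k - matVec E (xt k))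
    (c xtdu : EuclideanSpace ℝ (Fin N))
    (rdu : EuclideanSpace ℝ (Fin N))
    (hrdu : rdu = -c - matVec E.transpose xtdu)
    (y ybar : ℕ → ℝ)
    (hy : ∀ k, y k = c ⬝ᵥ x k)
    (hybar : ∀ k, ybar k = c ⬝ᵥ xt k - xtdu ⬝ᵥ r k) :
    ∀ k, 1 ≤ k →
      |y k - ybar k| ≤ ‖E⁻¹‖ * ‖rdu‖ * ‖rb k‖ + ‖xtdu‖ * ‖r k - rb k‖ := by
  intro k hk
  have hsub : ∀ u v, matVec E (u - v) = matVec E u - matVec E v := by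
    intro u v
    ext i
    simp [matVec, Matrix.mulVec_sub]
  have hdot : ∀ u v : EuclideanSpace ℝ (Fin N), |u ⬝ᵥ v| ≤ ‖u‖ * ‖v‖ := by
    intro u v
    have h := abs_real_inner_le_norm u v
    have h2 : inner ℝ u v = u ⬝ᵥ v := by
      rw [EuclideanSpace.inner_eq_star_dotProduct, dotProduct_comm]
      simp
    rwa [h2] at h
  have hb : rb k = matVec E (x k - xt k) := by
    rw [hrb k hk, hd k hk, hsub]; abel
  have he : x k - xt k = matVec E⁻¹ (rb k) := by
    rw [hb]
    ext i
    simp [matVec, Matrix.mulVec_mulVec,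
      Matrix.nonsing_inv_mul E ((Matrix.isUnit_iff_isUnit_det E).1 hE)]
  have hen : ‖x k - xt k‖ ≤ ‖E⁻¹‖ * ‖rb k‖ := by
    rw [he]
    exact Matrix.l2_opNorm_mulVec E⁻¹ (rb k)
  have hadj : (matVec E.transpose xtdu) ⬝ᵥ (x k - xt k) = xtdu ⬝ᵥ rb k := by
    rw [hb]
    simp [matVec, Matrix.dotProduct_mulVec, Matrix.mulVec_transpose]
  have hc : c = -rdu - matVec E.transpose xtdu := by rw [hrdu]; abel
  have hce : c ⬝ᵥ (x k - xt k) = -(rdu ⬝ᵥ (x k - xt k)) - xtdu ⬝ᵥ rb k := by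
    rw [← hadj]
    conv_lhs => rw [hc]
    simp [sub_dotProduct]
    ring
  have key : y k - ybar k = -(rdu ⬝ᵥ (x k - xt k)) + xtdu ⬝ᵥ (r k - rb k) := by
    rw [hy, hybar]
    have h1 : c ⬝ᵥ (x k - xt k) = c ⬝ᵥ x k - c ⬝ᵥ xt k := by simp [dotProduct_sub]
    have h2 : xtdu ⬝ᵥ (r k - rb k) = xtdu ⬝ᵥ r k - xtdu ⬝ᵥ rb k := by simp [dotProduct_sub]
    linarith
  rw [key]
  have h1 := hdot rdu (x k - xt k)
  have h2 := hdot xtdu (r k - rb k)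
  have h3 := mul_le_mul_of_nonneg_left hen (norm_nonneg rdu)
  have h4 := abs_add_le (-(rdu ⬝ᵥ (x k - xt k))) (xtdu ⬝ᵥ (r k - rb k))
  rw [abs_neg] at h4
  simp only [WithLp.ofLp_sub] at *
  linarith
end
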